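/- arXiv:math/9906189 — 2 statements merged into one kernel-verified Lean document; each statement's English description precedes it below -/
import Mathlib

section
/- The dynamical R-matrix of U_{q,λ}(ŝl(2)), namely the 4×4 matrix R(z;w) with nonzero entries R[11,11]=R[22,22]=1, R[12,12]=q(1−z)/(1−q²z), R[12,21]=(1−q²)(1−wz)/((1−q²z)(1−w)), R[21,12]=(1−q²)(z−w)/((1−q²z)(1−w)), R[21,21]=q(1−z)(1−wq²)(1−wq⁻²)/((1−q²z)(1−w)²), satisfies the dynamical Yang–Baxter equation R₁₂(z, wq^{2h⁽³⁾}) R₁₃(zz', w) R₂₃(z', wq^{2h⁽¹⁾}) = R₂₃(z', w) R₁₃(zz', wq^{2h⁽²⁾}) R₁₂(z, w), where the shift w → wq^{±2} in the k-th slot is applied according to the weight (h=+1 on the first basis vector, h=−1 on the second) of the vector in that tensor slot. -/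
open Matrix

/-- Encoding of a pair of indices of `Fin 2` into `Fin 4`, basis ordering (11,12,21,22).
The basis vector `0` has weight `+1`, the basis vector `1` has weight `-1`. -/
def enc (a b : Fin 2) : Fin 4 := ⟨2 * a.val + b.val, by have := a.isLt; have := b.isLt; omega⟩

def L12 {K : Type*} [Field K] (M : Matrix (Fin 4) (Fin 4) K) :
    Matrix (Fin 2 × Fin 2 × Fin 2) (Fin 2 × Fin 2 × Fin 2) K :=
  Matrix.of fun p q =>
    M (enc p.1 p.2.1) (enc q.1 q.2.1) * (if p.2.2 = q.2.2 then 1 else 0)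

def L23 {K : Type*} [Field K] (M : Matrix (Fin 4) (Fin 4) K) :
    Matrix (Fin 2 × Fin 2 × Fin 2) (Fin 2 × Fin 2 × Fin 2) K :=
  Matrix.of fun p q =>
    (if p.1 = q.1 then 1 else 0) * M (enc p.2.1 p.2.2) (enc q.2.1 q.2.2)

def L13 {K : Type*} [Field K] (M : Matrix (Fin 4) (Fin 4) K) :
    Matrix (Fin 2 × Fin 2 × Fin 2) (Fin 2 × Fin 2 × Fin 2) K :=
  Matrix.of fun p q =>
    M (enc p.1 p.2.2) (enc q.1 q.2.2) * (if p.2.1 = q.2.1 then 1 else 0)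

/-- Dynamical action on legs 1,2: the matrix used depends (via the family `F`)
on the index in the spectator slot 3. -/
def L12d {K : Type*} [Field K] (F : Fin 2 → Matrix (Fin 4) (Fin 4) K) :
    Matrix (Fin 2 × Fin 2 × Fin 2) (Fin 2 × Fin 2 × Fin 2) K :=
  Matrix.of fun p q =>
    F p.2.2 (enc p.1 p.2.1) (enc q.1 q.2.1) * (if p.2.2 = q.2.2 then 1 else 0)

/-- Dynamical action on legs 2,3: the matrix depends on the index in slot 1. -/
def L23d {K : Type*} [Field K] (F : Fin 2 → Matrix (Fin 4) (Fin 4) K) :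
    Matrix (Fin 2 × Fin 2 × Fin 2) (Fin 2 × Fin 2 × Fin 2) K :=
  Matrix.of fun p q =>
    (if p.1 = q.1 then 1 else 0) * F p.1 (enc p.2.1 p.2.2) (enc q.2.1 q.2.2)

/-- Dynamical action on legs 1,3: the matrix depends on the index in slot 2. -/
def L13d {K : Type*} [Field K] (F : Fin 2 → Matrix (Fin 4) (Fin 4) K) :
    Matrix (Fin 2 × Fin 2 × Fin 2) (Fin 2 × Fin 2 × Fin 2) K :=
  Matrix.of fun p q =>
    F p.2.1 (enc p.1 p.2.2) (enc q.1 q.2.2) * (if p.2.1 = q.2.1 then 1 else 0)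

/-- The multiplicative dynamical shift `w → w·q^{2ε}` according to the weight
`ε = +1` (index 0) or `ε = −1` (index 1). -/
def sh {K : Type*} [Field K] (q w : K) : Fin 2 → K :=
  fun ε => if ε = 0 then w * q ^ 2 else w / q ^ 2

/-- The dynamical R-matrix of `U_{q,λ}(sl2-hat)`, with `w = q^{2s}` the dynamical
parameter (unnormalized). -/
def Rdyn {K : Type*} [Field K] (q z w : K) : Matrix (Fin 4) (Fin 4) K :=
  !![1, 0, 0, 0;
     0, q * (1 - z) / (1 - q ^ 2 * z),
        (1 - q ^ 2) * (1 - w * z) / ((1 - q ^ 2 * z) * (1 - w)), 0;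
     0, (1 - q ^ 2) * (z - w) / ((1 - q ^ 2 * z) * (1 - w)),
        q * (1 - z) * (1 - w * q ^ 2) * (1 - w / q ^ 2) / ((1 - q ^ 2 * z) * (1 - w) ^ 2), 0;
     0, 0, 0, 1]

set_option maxHeartbeats 4000000 in
/-- The dynamical Yang–Baxter equation for the R-matrix of `U_{q,λ}(sl2-hat)`:
`R₁₂(z, wq^{2h⁽³⁾}) R₁₃(zz', w) R₂₃(z', wq^{2h⁽¹⁾})
  = R₂₃(z', w) R₁₃(zz', wq^{2h⁽²⁾}) R₁₂(z, w)`. -/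
theorem stmt3 {K : Type*} [Field K] (q z z' w : K) (hq : q ≠ 0)
    (h1 : 1 - q ^ 2 * z ≠ 0) (h2 : 1 - q ^ 2 * z' ≠ 0) (h3 : 1 - q ^ 2 * (z * z') ≠ 0)
    (h4 : 1 - w ≠ 0) (h5 : 1 - w * q ^ 2 ≠ 0) (h6 : 1 - w / q ^ 2 ≠ 0) :
    L12d (fun ε => Rdyn q z (sh q w ε)) * L13 (Rdyn q (z * z') w) *
        L23d (fun ε => Rdyn q z' (sh q w ε)) =
      L23 (Rdyn q z' w) * L13d (fun ε => Rdyn q (z * z') (sh q w ε)) *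
        L12 (Rdyn q z w) := by
  have h6' : q ^ 2 - w ≠ 0 := by
    intro h
    apply h6
    rw [← sub_eq_zero.mp h]
    exact sub_eq_zero.mpr (div_self (pow_ne_zero 2 hq)).symm
  have h5' : 1 - q ^ 2 * w ≠ 0 := by rwa [mul_comm]
  have h3' : 1 - q ^ 2 * z * z' ≠ 0 := by rwa [mul_assoc]
  ext ⟨a, b, c⟩ ⟨d, e, f⟩
  fin_cases a <;> fin_cases b <;> fin_cases c <;> fin_cases d <;> fin_cases e <;> fin_cases f <;>
    simp [Matrix.mul_apply, Fintype.sum_prod_type, Fin.sum_univ_two, L12, L13, L23, L12d, L13d,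
      L23d, Rdyn, sh, enc] <;>
    field_simp <;> ring
end

section
/- The eight-vertex deformed double Yangian R-matrix R_{V8}(β;r) (unnormalized, entries a,b,c,d as above with x=iβ/2r, y=π/2r: a=cos x cos y/cos(x+y), b=sin x cos y/sin(x+y), c=cos x sin y/sin(x+y), d=−sin x sin y/cos(x+y)) satisfies the additive Yang–Baxter equation R₁₂(β)R₁₃(β+β')R₂₃(β') = R₂₃(β')R₁₃(β+β')R₁₂(β). -/
open Matrix

/-- The unnormalized eight-vertex deformed double Yangian R-matrix `R_{V8}`, written in
the variables `sx = sin x`, `cx = cos x`, `sy = sin y`, `cy = cos y` with `x = iβ/2r`,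
`y = π/2r`: entries `a = cos x cos y/cos(x+y)`, `d = −sin x sin y/cos(x+y)`,
`b = sin x cos y/sin(x+y)`, `c = cos x sin y/sin(x+y)`. -/
def RV8 {K : Type*} [Field K] (sx cx sy cy : K) : Matrix (Fin 4) (Fin 4) K :=
  !![cx * cy / (cx * cy - sx * sy), 0, 0, -(sx * sy) / (cx * cy - sx * sy);
     0, sx * cy / (sx * cy + cx * sy), cx * sy / (sx * cy + cx * sy), 0;
     0, cx * sy / (sx * cy + cx * sy), sx * cy / (sx * cy + cx * sy), 0;
     -(sx * sy) / (cx * cy - sx * sy), 0, 0, cx * cy / (cx * cy - sx * sy)]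

/-- Eight-vertex matrix with entries `a, b, c, d`. -/
def V8 {K : Type*} [Field K] (a b c d : K) : Matrix (Fin 4) (Fin 4) K :=
  !![a, 0, 0, d; 0, b, c, 0; 0, c, b, 0; d, 0, 0, a]

set_option maxHeartbeats 4000000 in
/-- The eight-vertex Yang–Baxter equation reduces to six scalar equations. -/
theorem V8_ybe {K : Type*} [Field K] (a b c d e f g h p q r s : K)
    (E1 : a * e * s + d * g * p = s * f * b + p * h * c)
    (E2 : a * f * r + d * h * q = r * e * b + q * g * c)
    (E3 : a * g * p + d * e * s = r * e * c + q * g * b)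
    (E4 : a * g * s + d * e * p = q * f * d + r * h * a)
    (E5 : a * h * q + d * f * r = s * f * c + p * h * b)
    (E6 : b * g * r + c * e * q = s * h * b + p * f * c) :
    L12 (V8 a b c d) * L13 (V8 e f g h) * L23 (V8 p q r s) =
      L23 (V8 p q r s) * L13 (V8 e f g h) * L12 (V8 a b c d) := by
  ext ⟨i, j, k⟩ ⟨l, m, n⟩
  simp only [Matrix.mul_apply, Fintype.sum_prod_type, Fin.sum_univ_two, L12, L13, L23,
    Matrix.of_apply]
  fin_cases i <;> fin_cases j <;> fin_cases k <;> fin_cases l <;> fin_cases m <;> fin_cases n <;>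
    simp [enc, V8] <;>
    first
    | ring1
    | linear_combination E1
    | linear_combination E2
    | linear_combination E3
    | linear_combination E4
    | linear_combination E5
    | linear_combination E6
    | linear_combination -E1
    | linear_combination -E2
    | linear_combination -E3
    | linear_combination -E4
    | linear_combination -E5
    | linear_combination -E6

/-- The additive Yang–Baxter equation `R₁₂(β)R₁₃(β+β')R₂₃(β') = R₂₃(β')R₁₃(β+β')R₁₂(β)`
for the eight-vertex deformed double Yangian R-matrix; additivity in `β` means the
`x`-variables add, so leg 13 carries `sin(x+x') = sx·cx' + cx·sx'`,
`cos(x+x') = cx·cx' − sx·sx'`. -/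
theorem stmt9 {K : Type*} [Field K] (sx cx sx' cx' sy cy : K)
    (hx : sx ^ 2 + cx ^ 2 = 1) (hx' : sx' ^ 2 + cx' ^ 2 = 1) (hy : sy ^ 2 + cy ^ 2 = 1)
    (h1 : cx * cy - sx * sy ≠ 0) (h2 : sx * cy + cx * sy ≠ 0)
    (h3 : cx' * cy - sx' * sy ≠ 0) (h4 : sx' * cy + cx' * sy ≠ 0)
    (h5 : (cx * cx' - sx * sx') * cy - (sx * cx' + cx * sx') * sy ≠ 0)
    (h6 : (sx * cx' + cx * sx') * cy + (cx * cx' - sx * sx') * sy ≠ 0) :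
    L12 (RV8 sx cx sy cy) *
        L13 (RV8 (sx * cx' + cx * sx') (cx * cx' - sx * sx') sy cy) *
        L23 (RV8 sx' cx' sy cy) =
      L23 (RV8 sx' cx' sy cy) *
        L13 (RV8 (sx * cx' + cx * sx') (cx * cx' - sx * sx') sy cy) *
        L12 (RV8 sx cx sy cy) := by
  apply V8_ybe
  all_goals
    generalize hA : cx * cy - sx * sy = A at *
    generalize hB : sx * cy + cx * sy = B at *
    generalize hC : cx' * cy - sx' * sy = C at *
    generalize hD : sx' * cy + cx' * sy = D at *
    generalize hE : (cx * cx' - sx * sx') * cy - (sx * cx' + cx * sx') * sy = E at *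
    generalize hF : (sx * cx' + cx * sx') * cy + (cx * cx' - sx * sx') * sy = F at *
    clear hx hx' hy
    generalize hS : sx * cx' + cx * sx' = S at *
    generalize hT : cx * cx' - sx * sx' = T at *
    field_simp
    subst hA hB hC hD hE hF hS hT
    ring
end
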